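/- For an arbitrary permutation π₀ of [μ], every r ≥ 0, and every k ∈ [μ], one has π_r(k) = π₀(a_r(k) + b_r(k) − k). -/

import Mathlib

/-!
Call a maximal interval of `[μ]` whose interior positions are all red a *block* of the coloring
`f`; `a(k)` and `b(k)` are the end points of the block of `k`, so `k ↦ a(k) + b(k) - k` reverses
every block. The theorem says that `π_r` is `π₀` with every block of `f_r` reversed, and this is
an invariant of `T`. A non-trivial step merges the blocks from that of `i` to that of `j` into a
single block `[a, b]`: the positions `a⁻` and `b⁺` are green and keep their color, so all other
blocks survive unchanged. On `[a, b]` the new permutation is `π` after block reversal after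
`k ↦ a + b - k`; as `π` is `π₀` after block reversal and block reversal is an involution, this is
`π₀ (a + b - k)`, the reversal of the new block. The characterizations of the block end points
are `aVal_eq_iff` and `bVal_eq_iff`, and the invariance under one step is `isReversal_Tstep`.
-/

attribute [local instance] Classical.propDecidable

inductive Col where
  | green : Col
  | red : Col
deriving DecidableEq

namespace TOp

/-- The color of position `k⁺`; positions outside `{lo⁺, …, (hi−1)⁺}` count as green. -/
def fpos (lo hi : ℕ) (f : ℕ → Col) (k : ℕ) : Col :=
  if lo ≤ k ∧ k + 1 ≤ hi then f k else Col.green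

/-- `j` is a candidate value for `j_{(π,f)}` : there is `i < j` with
`f(i⁺) = f(j⁻) = green` and `{i,j} ∈ π⁻¹(𝓔)`. -/
def jSpec (lo hi : ℕ) (E : ℕ → ℕ → Prop) (π : ℕ → ℕ) (f : ℕ → Col) (j : ℕ) : Prop :=
  lo ≤ j ∧ j ≤ hi ∧ ∃ i, lo ≤ i ∧ i < j ∧
    fpos lo hi f i = Col.green ∧ fpos lo hi f (j - 1) = Col.green ∧ E (π i) (π j)

/-- `(π,f)` is not a fixed point of `T`, i.e. `j_{(π,f)} < +∞`. -/
def hasJ (lo hi : ℕ) (E : ℕ → ℕ → Prop) (π : ℕ → ℕ) (f : ℕ → Col) : Prop :=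
  ∃ j, jSpec lo hi E π f j

/-- `j_{(π,f)}` (junk value if no candidate exists). -/
noncomputable def jVal (lo hi : ℕ) (E : ℕ → ℕ → Prop) (π : ℕ → ℕ) (f : ℕ → Col) : ℕ :=
  sInf {j | jSpec lo hi E π f j}

/-- `i_{(π,f)}`. -/
noncomputable def iVal (lo hi : ℕ) (E : ℕ → ℕ → Prop) (π : ℕ → ℕ) (f : ℕ → Col) : ℕ :=
  sSup {i | lo ≤ i ∧ i < jVal lo hi E π f ∧ fpos lo hi f i = Col.green ∧
    E (π i) (π (jVal lo hi E π f))}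

/-- `a_{(π,f)}(k)`. -/
noncomputable def aVal (lo hi : ℕ) (f : ℕ → Col) (k : ℕ) : ℕ :=
  if fpos lo hi f (k - 1) = Col.green then k
  else sInf {i' | i' ≤ k ∧ ∀ i'', i' ≤ i'' → i'' < k → fpos lo hi f i'' = Col.red}

/-- `b_{(π,f)}(k)`. -/
noncomputable def bVal (lo hi : ℕ) (f : ℕ → Col) (k : ℕ) : ℕ :=
  if fpos lo hi f k = Col.green then k
  else sSup {j' | k ≤ j' ∧ ∀ j'', k < j'' → j'' ≤ j' → fpos lo hi f (j'' - 1) = Col.red}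

/-- The operator `T` on states `(π, f)`. -/
noncomputable def Tstep (lo hi : ℕ) (E : ℕ → ℕ → Prop)
    (s : (ℕ → ℕ) × (ℕ → Col)) : (ℕ → ℕ) × (ℕ → Col) :=
  if hasJ lo hi E s.1 s.2 then
    let a := aVal lo hi s.2 (iVal lo hi E s.1 s.2)
    let b := bVal lo hi s.2 (jVal lo hi E s.1 s.2)
    (fun k => if a ≤ k ∧ k ≤ b then
        s.1 (aVal lo hi s.2 (a + b - k) + bVal lo hi s.2 (a + b - k) - (a + b - k))
      else s.1 k,
     fun k => if a ≤ k ∧ k < b then Col.red else s.2 k)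
  else s

/-- `(π_r, f_r) = T^r(π₀, 𝐠𝐫𝐞𝐞𝐧)`. -/
noncomputable def TIter (lo hi : ℕ) (E : ℕ → ℕ → Prop) (π₀ : ℕ → ℕ) (r : ℕ) :
    (ℕ → ℕ) × (ℕ → Col) :=
  (Tstep lo hi E)^[r] (π₀, fun _ => Col.green)

/-- `j_{(π,f)}` as an extended natural number (`⊤` encodes `+∞`). -/
noncomputable def jE (lo hi : ℕ) (E : ℕ → ℕ → Prop) (π : ℕ → ℕ) (f : ℕ → Col) : ℕ∞ :=
  if hasJ lo hi E π f then (jVal lo hi E π f : ℕ∞) else ⊤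

end TOp

namespace TOp

/-- `a` is the left end of the block of `k`. -/
def IsLeft (μ : ℕ) (f : ℕ → Col) (k a : ℕ) : Prop :=
  1 ≤ a ∧ a ≤ k ∧ fpos 1 μ f (a - 1) = Col.green ∧ ∀ m, a ≤ m → m < k → fpos 1 μ f m = Col.red

/-- `b` is the right end of the block of `k`. -/
def IsRight (μ : ℕ) (f : ℕ → Col) (k b : ℕ) : Prop :=
  k ≤ b ∧ b ≤ μ ∧ fpos 1 μ f b = Col.green ∧ ∀ m, k ≤ m → m < b → fpos 1 μ f m = Col.red

theorem fpos_ne_green {lo hi : ℕ} {f : ℕ → Col} {k : ℕ} :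
    ¬ fpos lo hi f k = Col.green ↔ fpos lo hi f k = Col.red := by
  cases fpos lo hi f k <;> simp

theorem fpos_red {lo hi : ℕ} {f : ℕ → Col} {k : ℕ} (h : fpos lo hi f k = Col.red) :
    lo ≤ k ∧ k + 1 ≤ hi := by
  by_contra hc
  rw [fpos, if_neg hc] at h
  cases h

theorem isLeft_aVal {μ : ℕ} {f : ℕ → Col} {k : ℕ} (hk : 1 ≤ k) :
    IsLeft μ f k (aVal 1 μ f k) := by
  unfold aVal
  split_ifs with h
  · exact ⟨hk, le_rfl, h, fun m h1 h2 => by omega⟩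
  · set S := {i' | i' ≤ k ∧ ∀ i'', i' ≤ i'' → i'' < k → fpos 1 μ f i'' = Col.red} with hS
    obtain ⟨h1, h2⟩ : sInf S ∈ S :=
      Nat.sInf_mem ⟨k, le_rfl, fun m h1 h2 => by omega⟩
    -- the position `0` counts as green, which keeps the left end at least `1`
    have hpos : 1 ≤ sInf S := by
      by_contra h0
      have := fpos_red (h2 0 (by omega) (by omega))
      omega
    refine ⟨hpos, h1, ?_, h2⟩
    by_contra hg
    have hmem : sInf S - 1 ∈ S := by
      refine ⟨by omega, fun m hm1 hm2 => ?_⟩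
      rcases Nat.eq_or_lt_of_le hm1 with rfl | hlt
      · exact fpos_ne_green.1 hg
      · exact h2 m (by omega) hm2
    have := Nat.sInf_le hmem
    omega

theorem isRight_bVal {μ : ℕ} {f : ℕ → Col} {k : ℕ} (hk : k ≤ μ) :
    IsRight μ f k (bVal 1 μ f k) := by
  unfold bVal
  split_ifs with h
  · exact ⟨le_rfl, hk, h, fun m h1 h2 => by omega⟩
  · set S := {j' | k ≤ j' ∧ ∀ j'', k < j'' → j'' ≤ j' → fpos 1 μ f (j'' - 1) = Col.red} with hS
    have hle : ∀ j' ∈ S, j' ≤ μ := by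
      rintro j' ⟨h1, h2⟩
      by_contra hc
      have := fpos_red (h2 j' (by omega) le_rfl)
      omega
    have hbdd : BddAbove S := ⟨μ, hle⟩
    have hmem : sSup S ∈ S := Nat.sSup_mem ⟨k, le_rfl, fun m h1 h2 => by omega⟩ hbdd
    obtain ⟨h1, h2⟩ := hmem
    refine ⟨h1, hle _ ⟨h1, h2⟩, ?_, fun m hm1 hm2 => h2 (m + 1) (by omega) (by omega)⟩
    by_contra hg
    have hmem : sSup S + 1 ∈ S := by
      refine ⟨by omega, fun m hm1 hm2 => ?_⟩
      rcases Nat.eq_or_lt_of_le hm2 with rfl | hlt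
      · exact fpos_ne_green.1 hg
      · exact h2 m hm1 (by omega)
    have := le_csSup hbdd hmem
    omega

theorem aVal_eq_iff {μ : ℕ} {f : ℕ → Col} {k a : ℕ} (hk : 1 ≤ k) :
    aVal 1 μ f k = a ↔ IsLeft μ f k a := by
  refine ⟨fun h => h ▸ isLeft_aVal hk, fun ⟨h1, h2, h3, h4⟩ => ?_⟩
  obtain ⟨g1, g2, g3, g4⟩ := isLeft_aVal (μ := μ) (f := f) hk
  rcases lt_trichotomy (aVal 1 μ f k) a with h | h | h
  · have := g4 (a - 1) (by omega) (by omega)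
    simp_all
  · exact h
  · have := h4 (aVal 1 μ f k - 1) (by omega) (by omega)
    simp_all

theorem bVal_eq_iff {μ : ℕ} {f : ℕ → Col} {k b : ℕ} (hk : k ≤ μ) :
    bVal 1 μ f k = b ↔ IsRight μ f k b := by
  refine ⟨fun h => h ▸ isRight_bVal hk, fun ⟨h1, h2, h3, h4⟩ => ?_⟩
  obtain ⟨g1, g2, g3, g4⟩ := isRight_bVal (μ := μ) (f := f) hk
  rcases lt_trichotomy (bVal 1 μ f k) b with h | h | h
  · have := h4 _ g1 h
    simp_all
  · exact h
  · have := g4 _ h1 h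
    simp_all

/-- Block reversal maps every block to itself. -/
theorem rev_block {μ : ℕ} {f : ℕ → Col} {k : ℕ} (hk1 : 1 ≤ k) (hk2 : k ≤ μ) :
    aVal 1 μ f (aVal 1 μ f k + bVal 1 μ f k - k) = aVal 1 μ f k ∧
      bVal 1 μ f (aVal 1 μ f k + bVal 1 μ f k - k) = bVal 1 μ f k := by
  obtain ⟨h1, h2, h3, h4⟩ := isLeft_aVal (μ := μ) (f := f) hk1
  obtain ⟨g1, g2, g3, g4⟩ := isRight_bVal (μ := μ) (f := f) hk2
  set a := aVal 1 μ f k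
  set b := bVal 1 μ f k
  have hred : ∀ m, a ≤ m → m < b → fpos 1 μ f m = Col.red := fun m hm1 hm2 => by
    rcases lt_or_ge m k with hm | hm
    · exact h4 m hm1 hm
    · exact g4 m hm hm2
  constructor
  · rw [aVal_eq_iff (by omega)]
    exact ⟨h1, by omega, h3, fun m hm1 hm2 => hred m hm1 (by omega)⟩
  · rw [bVal_eq_iff (by omega)]
    exact ⟨by omega, g2, g3, fun m hm1 hm2 => hred m (by omega) hm2⟩

/-- The permutation of the state `s` is `π₀` with every block of the coloring reversed. -/
def IsReversal (μ : ℕ) (π₀ : ℕ → ℕ) (s : (ℕ → ℕ) × (ℕ → Col)) : Prop :=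
  ∀ k, 1 ≤ k → k ≤ μ → s.1 k = π₀ (aVal 1 μ s.2 k + bVal 1 μ s.2 k - k)

/-- The minimum defining `j` and the maximum defining `i` are attained in a non-fixed state. -/
theorem iVal_jVal_spec {μ : ℕ} {E : ℕ → ℕ → Prop} {π : ℕ → ℕ} {f : ℕ → Col}
    (h : hasJ 1 μ E π f) :
    1 ≤ iVal 1 μ E π f ∧ iVal 1 μ E π f < jVal 1 μ E π f ∧ jVal 1 μ E π f ≤ μ := by
  obtain ⟨-, hj, i, hi1, hi2, hi3, -, hE⟩ : jSpec 1 μ E π f (jVal 1 μ E π f) := Nat.sInf_mem h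
  obtain ⟨g1, g2, -, -⟩ : iVal 1 μ E π f ∈ {i | 1 ≤ i ∧ i < jVal 1 μ E π f ∧
      fpos 1 μ f i = Col.green ∧ E (π i) (π (jVal 1 μ E π f))} :=
    Nat.sSup_mem ⟨i, hi1, hi2, hi3, hE⟩ ⟨jVal 1 μ E π f, fun m hm => hm.2.1.le⟩
  exact ⟨g1, g2, hj⟩

theorem isReversal_Tstep {μ : ℕ} {E : ℕ → ℕ → Prop} {π₀ : ℕ → ℕ} {s : (ℕ → ℕ) × (ℕ → Col)}
    (hs : IsReversal μ π₀ s) : IsReversal μ π₀ (Tstep 1 μ E s) := by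
  unfold Tstep
  split_ifs with h
  swap
  · exact hs
  obtain ⟨π, f⟩ := s
  dsimp only at h ⊢
  obtain ⟨hi1, hij, hjμ⟩ := iVal_jVal_spec h
  obtain ⟨a1, a2, a3, -⟩ := isLeft_aVal (μ := μ) (f := f) hi1
  obtain ⟨b1, b2, b3, -⟩ := isRight_bVal (μ := μ) (f := f) hjμ
  set a := aVal 1 μ f (iVal 1 μ E π f)
  set b := bVal 1 μ f (jVal 1 μ E π f)
  set f' : ℕ → Col := fun k => if a ≤ k ∧ k < b then Col.red else f k with hf'
  have hin : ∀ m, a ≤ m → m < b → fpos 1 μ f' m = Col.red := fun m h1 h2 => by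
    simp [fpos, hf', h1, h2]; omega
  have hout : ∀ m, m < a ∨ b ≤ m → fpos 1 μ f' m = fpos 1 μ f m := fun m hm => by
    have : ¬ (a ≤ m ∧ m < b) := by omega
    simp only [fpos, hf', this, if_false]
  intro k hk1 hk2
  dsimp only
  split_ifs with hk
  · have ha : aVal 1 μ f' k = a := by
      rw [aVal_eq_iff hk1]
      exact ⟨a1, hk.1, by rw [hout _ (by omega)]; exact a3, fun m h1 h2 => hin m h1 (by omega)⟩
    have hb : bVal 1 μ f' k = b := by
      rw [bVal_eq_iff hk2]
      exact ⟨hk.2, b2, by rw [hout _ (by omega)]; exact b3, fun m h1 h2 => hin m (by omega) h2⟩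
    have l1 : 1 ≤ a + b - k := by omega
    have l2 : a + b - k ≤ μ := by omega
    obtain ⟨r1, r2⟩ := rev_block (f := f) l1 l2
    have c1 := (isLeft_aVal (μ := μ) (f := f) l1).1
    have c2 := (isLeft_aVal (μ := μ) (f := f) l1).2.1
    have c3 := (isRight_bVal (μ := μ) (f := f) l2).1
    have c4 := (isRight_bVal (μ := μ) (f := f) l2).2.1
    rw [ha, hb]
    have := hs (aVal 1 μ f (a + b - k) + bVal 1 μ f (a + b - k) - (a + b - k))
      (by omega) (by omega)
    dsimp only at this
    rw [this, r1, r2]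
    congr 1
    omega
  · obtain ⟨g1, g2, g3, g4⟩ := isLeft_aVal (μ := μ) (f := f) hk1
    obtain ⟨d1, d2, d3, d4⟩ := isRight_bVal (μ := μ) (f := f) hk2
    -- the green positions `a⁻` and `b⁺` keep the old block of `k` away from `[a, b]`
    have hsep : (k < a ∧ bVal 1 μ f k < a) ∨ (b < k ∧ b < aVal 1 μ f k) := by
      rcases lt_or_ge k a with hka | hka
      · refine Or.inl ⟨hka, ?_⟩
        by_contra hc
        have := d4 (a - 1) (by omega) (by omega)
        simp_all
      · refine Or.inr ⟨by omega, ?_⟩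
        by_contra hc
        have := g4 b (by omega) (by omega)
        simp_all
    have ha : aVal 1 μ f' k = aVal 1 μ f k := by
      rw [aVal_eq_iff hk1]
      exact ⟨g1, g2, by rw [hout _ (by omega)]; exact g3,
        fun m h1 h2 => by rw [hout _ (by omega)]; exact g4 m h1 h2⟩
    have hb : bVal 1 μ f' k = bVal 1 μ f k := by
      rw [bVal_eq_iff hk2]
      exact ⟨d1, d2, by rw [hout _ (by omega)]; exact d3,
        fun m h1 h2 => by rw [hout _ (by omega)]; exact d4 m h1 h2⟩
    rw [ha, hb]
    exact hs k hk1 hk2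

theorem isReversal_TIter (μ : ℕ) (E : ℕ → ℕ → Prop) (π₀ : ℕ → ℕ) (r : ℕ) :
    IsReversal μ π₀ (TIter 1 μ E π₀ r) := by
  induction r with
  | zero =>
    intro k _ _
    simp [TIter, aVal, bVal, fpos]
  | succ r ih =>
    unfold TIter at ih ⊢
    rw [Function.iterate_succ_apply']
    exact isReversal_Tstep ih

end TOp

open TOp in
/-- For an arbitrary permutation `π₀` of `[μ]`, every `r ≥ 0` and every
`k ∈ [μ]`, one has `π_r(k) = π₀(a_r(k) + b_r(k) − k)`. -/
theorem stmt7 (μ : ℕ) (hμ : 2 ≤ μ) (E : ℕ → ℕ → Prop)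
    (hEsymm : ∀ x y, E x y → E y x)
    (hEirr : ∀ x, ¬ E x x)
    (hEmem : ∀ x y, E x y → 1 ≤ x ∧ x ≤ μ ∧ 1 ≤ y ∧ y ≤ μ)
    (hEclique : ∀ x y z, E x y → E y z → x ≠ z → E x z)
    (π₀ : ℕ → ℕ) (hπ₀ : Set.BijOn π₀ (Set.Icc 1 μ) (Set.Icc 1 μ))
    (r k : ℕ) (hk1 : 1 ≤ k) (hk2 : k ≤ μ) :
    (TIter 1 μ E π₀ r).1 k =
      π₀ (aVal 1 μ (TIter 1 μ E π₀ r).2 k + bVal 1 μ (TIter 1 μ E π₀ r).2 k - k) := by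
  exact isReversal_TIter μ E π₀ r k hk1 hk2
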